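/- The modular discriminant Δ satisfies the van der Pol–Rankin fourth-order nonlinear ODE: for every τ ∈ ℍ, 2Δ³Δ'''' − 10Δ²Δ'Δ''' − 3Δ²(Δ'')² + 24Δ(Δ')²Δ'' − 13(Δ')⁴ = 0. -/

import Mathlib

open Complex

noncomputable section

/-- The normalized derivative `F' = (2πi)⁻¹ dF/dτ`. -/
def nderiv (F : ℂ → ℂ) : ℂ → ℂ := fun τ => (2 * Real.pi * Complex.I)⁻¹ * deriv F τ

/-- `q = e^{2πiτ}`. -/
def qq (τ : ℂ) : ℂ := Complex.exp (2 * Real.pi * Complex.I * τ)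

/-- The modular discriminant `Δ(τ) = q ∏_{n≥1} (1 − qⁿ)²⁴`. -/
def Δ : ℂ → ℂ := fun τ => qq τ * ∏' n : ℕ, (1 - qq τ ^ (n + 1)) ^ 24

namespace VdPol

open UpperHalfPlane hiding I
open Derivative EisensteinSeries ModularForm
open scoped Manifold Topology MatrixGroups ModularForm Real
open Filter

/-- The derivative of a function with a limit at `i∞` tends to zero. -/
lemma D_tendsto {F : ℍ → ℂ} (hF : MDiff F) {c : ℂ} (h : Tendsto F atImInfty (𝓝 c)) :
    Tendsto (normalizedDerivOfComplex F) atImInfty (𝓝 0) := by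
  rw [Metric.tendsto_nhds] at h ⊢
  intro ε hε
  obtain ⟨A, hA⟩ := (UpperHalfPlane.atImInfty_mem _).mp (h (ε / 2) (by positivity))
  refine (UpperHalfPlane.atImInfty_mem _).mpr ⟨max A 0 + 2, fun z hz => ?_⟩
  have hA0 : A ≤ max A 0 := le_max_left _ _
  have h00 : 0 ≤ max A 0 := le_max_right _ _
  have him : ∀ w ∈ Metric.closedBall (z : ℂ) 1, max A 0 + 1 ≤ w.im := by
    intro w hw
    rw [Metric.mem_closedBall, Complex.dist_eq] at hw
    have h1 := (Complex.abs_im_le_norm (w - z)).trans hw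
    rw [Complex.sub_im, abs_le] at h1
    have h2 : (z : ℂ).im = z.im := rfl
    linarith [h1.1]
  have hd : DifferentiableOn ℂ (fun w => (F ∘ ofComplex) w - c) (Metric.closedBall (z : ℂ) 1) := by
    intro w hw
    have hw0 : 0 < w.im := by linarith [him w hw]
    have := (UpperHalfPlane.mdifferentiable_iff.mp hF).differentiableAt
      (isOpen_upperHalfPlaneSet.mem_nhds hw0)
    exact (this.sub_const c).differentiableWithinAt
  have hb : ∀ w ∈ Metric.sphere (z : ℂ) 1, ‖(F ∘ ofComplex) w - c‖ ≤ ε / 2 := by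
    intro w hw
    have hw1 := him w (Metric.sphere_subset_closedBall hw)
    have hw0 : 0 < w.im := by linarith
    have := hA ⟨w, hw0⟩ (by change A ≤ w.im; linarith)
    simp only [Set.mem_ofPred_eq, Complex.dist_eq] at this
    rw [Function.comp_apply, ofComplex_apply_of_im_pos hw0]
    exact this.le
  have hder := Complex.norm_deriv_le_of_forall_mem_sphere_norm_le (one_pos)
    (hd.diffContOnCl_ball subset_rfl) hb
  rw [deriv_sub_const] at hder
  simp only [Set.mem_ofPred_eq, dist_zero_right, normalizedDerivOfComplex, norm_mul]
  have hpi : ‖(2 * π * I : ℂ)⁻¹‖ ≤ 1 := by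
    rw [norm_inv]
    apply inv_le_one_of_one_le₀
    simp [abs_of_pos Real.pi_pos]
    linarith [Real.pi_gt_three]
  calc _ ≤ 1 * (ε / 2 / 1) := mul_le_mul hpi hder (norm_nonneg _) zero_le_one
    _ < ε := by linarith

lemma disc_mdiff : MDiff ModularForm.discriminant := CuspForm.discriminant.holo'

lemma D_disc : normalizedDerivOfComplex ModularForm.discriminant
    = E2 * ModularForm.discriminant := by
  ext z
  have h := logDeriv_eta_eq_E2 z
  have hne := eta_ne_zero z.2
  have hdiff := differentiableAt_eta_of_mem_upperHalfPlaneSet z.2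
  rw [logDeriv_apply, div_eq_iff hne] at h
  have hev : (ModularForm.discriminant ∘ ofComplex) =ᶠ[𝓝 (z : ℂ)] fun w => ModularForm.eta w ^ 24 := by
    filter_upwards [isOpen_upperHalfPlaneSet.mem_nhds z.im_pos] with w hw
    simp [ModularForm.discriminant, ofComplex_apply_of_im_pos hw]
  have hpi : (π : ℂ) ≠ 0 := Complex.ofReal_ne_zero.mpr Real.pi_ne_zero
  rw [normalizedDerivOfComplex, hev.deriv_eq, (hdiff.hasDerivAt.fun_pow 24).deriv, h]
  simp only [Pi.mul_apply, ModularForm.discriminant]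
  field_simp
  push_cast
  ring

lemma E2_tendsto : Tendsto E2 atImInfty (𝓝 1) := by
  set p : ℍ → ℂ := fun x : ℍ ↦ ∏' (n : ℕ), (1 - eta_q n x) ^ 24 with hp
  set q : ℍ → ℂ := fun x : ℍ ↦ Function.Periodic.qParam 1 x with hq
  have hpt : Tendsto p atImInfty (𝓝 1) := tendsto_atImInfty_tprod_one_sub_eta_q_pow
  have hqp : ModularForm.discriminant = q * p := by
    ext z; exact discriminant_eq_q_prod z
  have hqd : MDiff q := by
    rw [UpperHalfPlane.mdifferentiable_iff]
    refine DifferentiableOn.congr (f := fun w => Function.Periodic.qParam 1 w) ?_ ?_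
    · intro w hw
      exact (by fun_prop : DifferentiableAt ℂ (fun w => Function.Periodic.qParam 1 w) w).differentiableWithinAt
    · intro w hw
      simp [hq, ofComplex_apply_of_im_pos hw]
  have hpd : MDiff p := by
    rw [UpperHalfPlane.mdifferentiable_iff]
    refine DifferentiableOn.congr (f := fun w => (∏' (n : ℕ), (1 - eta_q n w)) ^ 24) ?_ ?_
    · intro w hw
      exact ((differentiableAt_eta_tprod hw).pow 24).differentiableWithinAt
    · intro w hw
      simp only [hp, Function.comp_apply, ofComplex_apply_of_im_pos hw]
      exact (multipliableLocallyUniformlyOn_eta.multipliable hw).tprod_pow _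
  have hpi : (π : ℂ) ≠ 0 := Complex.ofReal_ne_zero.mpr Real.pi_ne_zero
  have hDq : normalizedDerivOfComplex q = q := by
    ext z
    have hev : (q ∘ ofComplex) =ᶠ[𝓝 (z : ℂ)] fun w => Complex.exp (2 * π * I * w) := by
      filter_upwards [isOpen_upperHalfPlaneSet.mem_nhds z.im_pos] with w hw
      simp [hq, Function.Periodic.qParam, ofComplex_apply_of_im_pos hw]
    rw [normalizedDerivOfComplex, hev.deriv_eq]
    have : HasDerivAt (fun w : ℂ => Complex.exp (2 * π * I * w)) _ (z : ℂ) :=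
      ((hasDerivAt_id (z : ℂ)).const_mul (2 * π * I : ℂ)).cexp
    rw [this.deriv]
    simp only [hq, Function.Periodic.qParam, id, Complex.ofReal_one, div_one, mul_one]
    field_simp
  have key : ∀ z, E2 z = 1 + normalizedDerivOfComplex p z / p z := by
    intro z
    have h := congrFun D_disc z
    have hne := discriminant_ne_zero z
    rw [hqp, normalizedDerivOfComplex_mul q p hqd hpd, hDq] at h
    rw [hqp] at hne
    simp only [Pi.add_apply, Pi.mul_apply] at h hne
    have h1 := left_ne_zero_of_mul hne
    have h2 := right_ne_zero_of_mul hne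
    field_simp
    apply mul_left_cancel₀ h1
    linear_combination -h
  have := ((D_tendsto hpd hpt).div hpt one_ne_zero).const_add 1
  simp only [zero_div, add_zero] at this
  exact this.congr fun z => (key z).symm

/-- weight 4 form, `-E₄/12` -/
def f4 : ℍ → ℂ := serreDerivative 1 E2
/-- weight 6 form -/
def f6 : ℍ → ℂ := serreDerivative ((4 : ℤ) : ℂ) f4
/-- weight 8 form -/
def f8 : ℍ → ℂ := serreDerivative ((6 : ℤ) : ℂ) f6

lemma f4_mdiff : MDiff f4 := serreDerivative_mdifferentiable _ E2_mdifferentiable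
lemma f6_mdiff : MDiff f6 := serreDerivative_mdifferentiable _ f4_mdiff
lemma f8_mdiff : MDiff f8 := serreDerivative_mdifferentiable _ f6_mdiff

lemma f4_tendsto : Tendsto f4 atImInfty (𝓝 (-1 / 12)) := by
  have h := (D_tendsto E2_mdifferentiable E2_tendsto).sub
    ((E2_tendsto.const_mul (1 * 12⁻¹)).mul E2_tendsto)
  refine Tendsto.congr (fun _ => rfl) (h.trans (le_of_eq ?_))
  norm_num
lemma f6_tendsto : Tendsto f6 atImInfty (𝓝 (1 / 36)) := by
  have h := (D_tendsto f4_mdiff f4_tendsto).sub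
    ((E2_tendsto.const_mul (((4 : ℤ) : ℂ) * 12⁻¹)).mul f4_tendsto)
  refine Tendsto.congr (fun _ => rfl) (h.trans (le_of_eq ?_))
  norm_num
lemma f8_tendsto : Tendsto f8 atImInfty (𝓝 (-1 / 72)) := by
  have h := (D_tendsto f6_mdiff f6_tendsto).sub
    ((E2_tendsto.const_mul (((6 : ℤ) : ℂ) * 12⁻¹)).mul f6_tendsto)
  refine Tendsto.congr (fun _ => rfl) (h.trans (le_of_eq ?_))
  norm_num

lemma D_D2 (γ : SL(2, ℤ)) (z : ℍ) :
    HasDerivAt ((D2 γ) ∘ ofComplex) (-(2 * π * I * (γ 1 0) ^ 2) / (denom γ z) ^ 2) (z : ℂ) := by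
  have hev : ((D2 γ) ∘ ofComplex) =ᶠ[𝓝 (z : ℂ)]
      fun w => (2 * π * I * γ 1 0) / (γ 1 0 * w + γ 1 1) := by
    filter_upwards [isOpen_upperHalfPlaneSet.mem_nhds z.im_pos] with w hw
    rw [Function.comp_apply, ofComplex_apply_of_im_pos hw, D2, ModularGroup.denom_apply]
  have hne : (γ 1 0 * (z : ℂ) + γ 1 1 : ℂ) ≠ 0 := by
    rw [← ModularGroup.denom_apply]; exact denom_ne_zero _ z
  refine HasDerivAt.congr_of_eventuallyEq ?_ hev
  have h1 : HasDerivAt (fun w : ℂ => (γ 1 0 * w + γ 1 1 : ℂ)) (γ 1 0 : ℂ) (z : ℂ) := by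
    simpa using ((hasDerivAt_id (z : ℂ)).const_mul (γ 1 0 : ℂ)).add_const (γ 1 1 : ℂ)
  have h2 := (hasDerivAt_const (z : ℂ) (2 * π * I * γ 1 0 : ℂ)).div h1 hne
  refine h2.congr_deriv ?_
  rw [ModularGroup.denom_apply]
  ring

lemma f4_slash (γ : SL(2, ℤ)) : f4 ∣[(4 : ℤ)] γ = f4 := by
  have hpi : (π : ℂ) ≠ 0 := Complex.ofReal_ne_zero.mpr Real.pi_ne_zero
  ext z
  have hdz : denom γ z ≠ 0 := denom_ne_zero _ z
  set u : ℂ := (E2 ∣[(2 : ℤ)] γ) z with hu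
  have hE2z : u = E2 z - 1 / (2 * riemannZeta 2) * D2 γ z := by
    simp [hu, E2_slash_action]
  have hD1 : (normalizedDerivOfComplex (E2 ∣[(2 : ℤ)] γ)) z =
      (normalizedDerivOfComplex E2 ∣[(4 : ℤ)] γ) z -
      (((2 : ℤ) : ℂ) * (2 * π * I)⁻¹ * (γ 1 0 / denom γ z) * u) := by
    have := congrFun (normalizedDerivOfComplex_SL_slash (k := 2) E2_mdifferentiable (γ := γ)) z
    simpa using this
  have hD2 : (normalizedDerivOfComplex (E2 ∣[(2 : ℤ)] γ)) z = normalizedDerivOfComplex E2 z -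
      1 / (2 * riemannZeta 2) *
        ((2 * π * I)⁻¹ * (-(2 * π * I * (γ 1 0) ^ 2) / (denom γ z) ^ 2)) := by
    rw [E2_slash_action]
    simp only [normalizedDerivOfComplex]
    have hE : DifferentiableAt ℂ (E2 ∘ ofComplex) (z : ℂ) :=
      mdifferentiableAt_iff.mp (E2_mdifferentiable z)
    have := hE.hasDerivAt.sub ((D_D2 γ z).const_mul (1 / (2 * riemannZeta 2)))
    have h3 : ((E2 - (1 / (2 * riemannZeta 2)) • D2 γ) ∘ ofComplex) =
      (E2 ∘ ofComplex) - fun w => 1 / (2 * riemannZeta 2) * (D2 γ ∘ ofComplex) w := by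
      ext w; simp
    rw [h3, this.deriv]
    ring
  have hS : (f4 ∣[(4 : ℤ)] γ) z = (normalizedDerivOfComplex E2 ∣[(4 : ℤ)] γ) z
      - 12⁻¹ * (u * u) := by
    have := congrFun (ModularForm.mul_slash_SL2 2 2 γ E2 E2) z
    rw [show (2 : ℤ) + 2 = 4 by norm_num, Pi.mul_apply, ← hu, SL_slash_apply, Pi.mul_apply] at this
    rw [← this, SL_slash_apply, SL_slash_apply, f4, serreDerivative_apply]
    ring
  rw [hS]
  simp only [f4, serreDerivative_apply]
  rw [hD2] at hD1
  rw [riemannZeta_two] at hD1 hE2z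
  simp only [D2] at hE2z
  rw [hE2z] at hD1 ⊢
  have hI : I ^ 2 = -1 := I_sq
  push_cast at hD1
  rw [eq_sub_iff_add_eq] at hD1
  rw [← hD1]
  field_simp
  grind

lemma f6_slash (γ : SL(2, ℤ)) : f6 ∣[(6 : ℤ)] γ = f6 :=
  serreDerivative_slash_invariant f4_mdiff (f4_slash γ)
lemma f8_slash (γ : SL(2, ℤ)) : f8 ∣[(8 : ℤ)] γ = f8 :=
  serreDerivative_slash_invariant f6_mdiff (f6_slash γ)

/-- The weight 8 combination that vanishes. -/
def X8 : ℍ → ℂ := f8 + (2 : ℂ) • (f4 * f4)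

lemma X8_slash (γ : SL(2, ℤ)) : X8 ∣[(8 : ℤ)] γ = X8 := by
  have := ModularForm.mul_slash_SL2 4 4 γ f4 f4
  rw [f4_slash, show (4 : ℤ) + 4 = 8 by norm_num] at this
  rw [X8, SlashAction.add_slash, f8_slash, ModularForm.SL_smul_slash, this]

/-- `X8` as a cusp form. -/
def X8cusp : CuspForm 𝒮ℒ 8 where
  toFun := X8
  slash_action_eq' A hA := by
    obtain ⟨A, rfl⟩ := hA
    exact X8_slash A
  holo' := f8_mdiff.add ((f4_mdiff.mul f4_mdiff).const_smul 2)
  zero_at_cusps' hc := by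
    rw [OnePoint.isZeroAt_iff_forall_SL2Z hc]
    intro γ _
    change IsZeroAtImInfty (X8 ∣[(8 : ℤ)] γ)
    rw [X8_slash]
    have := f8_tendsto.add ((f4_tendsto.mul f4_tendsto).const_mul 2)
    rw [show (-1 / 72 + 2 * (-1 / 12 * (-1 / 12)) : ℂ) = 0 by norm_num] at this
    exact this

lemma X8_eq_zero (z : ℍ) : f8 z + 2 * (f4 z * f4 z) = 0 := by
  have h := rank_zero_iff_forall_zero.mp
    (CuspForm.rank_eq_zero_of_weight_lt_twelve (k := 8) (by norm_num)) X8cusp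
  exact congrFun (congrArg (fun f : CuspForm 𝒮ℒ 8 => (f : ℍ → ℂ)) h) z

lemma nderiv_eq {F : ℂ → ℂ} {f : ℍ → ℂ} (h : ∀ z : ℍ, F z = f z) (z : ℍ) :
    nderiv F z = normalizedDerivOfComplex f z := by
  have hev : F =ᶠ[𝓝 (z : ℂ)] f ∘ ofComplex := by
    filter_upwards [isOpen_upperHalfPlaneSet.mem_nhds z.im_pos] with w hw
    simpa [ofComplex_apply_of_im_pos hw] using h ⟨w, hw⟩
  rw [nderiv, hev.deriv_eq, normalizedDerivOfComplex]

lemma Delta_eq (z : ℍ) : Δ z = ModularForm.discriminant z := by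
  rw [discriminant_eq_q_prod]
  simp [Δ, qq, eta_q, Function.Periodic.qParam]

lemma D_E2 : normalizedDerivOfComplex E2 = f4 + (12⁻¹ : ℂ) • (E2 * E2) := by
  ext z; simp [f4]; ring
lemma D_f4 : normalizedDerivOfComplex f4 = f6 + (3⁻¹ : ℂ) • (E2 * f4) := by
  ext z; simp [f6]; ring
lemma D_f6 : normalizedDerivOfComplex f6 = f8 + (2⁻¹ : ℂ) • (E2 * f6) := by
  ext z; simp [f8]; ring

end VdPol

open VdPol UpperHalfPlane Derivative EisensteinSeries in
lemma VdPol.main (z : ℍ) :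
      2 * Δ z ^ 3 * nderiv (nderiv (nderiv (nderiv Δ))) z -
      10 * Δ z ^ 2 * nderiv Δ z * nderiv (nderiv (nderiv Δ)) z -
      3 * Δ z ^ 2 * (nderiv (nderiv Δ) z) ^ 2 +
      24 * Δ z * (nderiv Δ z) ^ 2 * nderiv (nderiv Δ) z -
      13 * (nderiv Δ z) ^ 4 = 0 := by
  have hP := E2_mdifferentiable
  have h4 := f4_mdiff
  have h6 := f6_mdiff
  have hd := disc_mdiff
  have e1 := nderiv_eq Delta_eq
  have e2 := nderiv_eq e1
  have e3 := nderiv_eq e2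
  have e4 := nderiv_eq e3
  rw [e1, e2, e3, e4, Delta_eq]
  set d := ModularForm.discriminant
  have a1 : normalizedDerivOfComplex d = E2 * d := D_disc
  have hPP := hP.mul hP
  have m2 : normalizedDerivOfComplex (E2 * d)
      = (f4 + (12⁻¹ : ℂ) • (E2 * E2)) * d + E2 * (E2 * d) := by
    rw [normalizedDerivOfComplex_mul _ _ hP hd, D_E2, a1]
  have a2 : (f4 + (12⁻¹ : ℂ) • (E2 * E2)) * d + E2 * (E2 * d)
      = (f4 + (13 / 12 : ℂ) • (E2 * E2)) * d := by
    ext z; simp; ring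
  have dPP : normalizedDerivOfComplex (E2 * E2) = (2 : ℂ) • (E2 * (f4 + (12⁻¹ : ℂ) • (E2 * E2))) := by
    rw [normalizedDerivOfComplex_mul _ _ hP hP, D_E2]; ext z; simp; ring
  have hPPs := hPP.const_smul (13 / 12 : ℂ)
  have m3 : normalizedDerivOfComplex ((f4 + (13 / 12 : ℂ) • (E2 * E2)) * d)
      = (f6 + (7 / 2 : ℂ) • (E2 * f4) + (91 / 72 : ℂ) • (E2 * (E2 * E2))) * d := by
    rw [normalizedDerivOfComplex_mul _ _ (h4.add hPPs) hd,
      normalizedDerivOfComplex_add _ _ h4 hPPs, normalizedDerivOfComplex_smul _ _ hPP, dPP, D_f4, a1]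
    ext z; simp; ring
  have hPf := hP.mul h4
  have hP3 := hP.mul hPP
  have hPfs := hPf.const_smul (7 / 2 : ℂ)
  have hP3s := hP3.const_smul (91 / 72 : ℂ)
  have m4 : normalizedDerivOfComplex
      ((f6 + (7 / 2 : ℂ) • (E2 * f4) + (91 / 72 : ℂ) • (E2 * (E2 * E2))) * d) z
      = (f8 z + 5 * E2 z * f6 z + 7 / 2 * f4 z ^ 2 + (7 / 24 + 7 / 6 + 91 / 24 + 7 / 2) * E2 z ^ 2 * f4 z
        + (91 / 288 + 91 / 72) * E2 z ^ 4) * d z := by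
    rw [normalizedDerivOfComplex_mul _ _ ((h6.add hPfs).add hP3s) hd,
      normalizedDerivOfComplex_add _ _ (h6.add hPfs) hP3s,
      normalizedDerivOfComplex_add _ _ h6 hPfs,
      normalizedDerivOfComplex_smul _ _ hPf, normalizedDerivOfComplex_smul _ _ hP3,
      normalizedDerivOfComplex_mul _ _ hP h4,
      normalizedDerivOfComplex_mul _ _ hP hPP, dPP, D_E2, D_f4, D_f6, a1]
    simp; ring
  rw [a1, m2, a2, m3, m4]
  simp
  linear_combination (2 * d z ^ 4) * X8_eq_zero z

/-- The modular discriminant satisfies the van der Pol–Rankin fourth-order ODE. -/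
theorem discriminant_vdPol_Rankin_ODE :
    ∀ τ : ℂ, 0 < τ.im →
      2 * Δ τ ^ 3 * nderiv (nderiv (nderiv (nderiv Δ))) τ -
      10 * Δ τ ^ 2 * nderiv Δ τ * nderiv (nderiv (nderiv Δ)) τ -
      3 * Δ τ ^ 2 * (nderiv (nderiv Δ) τ) ^ 2 +
      24 * Δ τ * (nderiv Δ τ) ^ 2 * nderiv (nderiv Δ) τ -
      13 * (nderiv Δ τ) ^ 4 = 0 := by
  intro τ hτ
  exact VdPol.main ⟨τ, hτ⟩
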